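/- Polynomial bound on the weight: for every SHOπ process P, W(P) ≤ |P|^(B(P)+1), where W(P) = W_{D(P)}(P) is the weight, |P| the size, and B(P) the box depth; the analogous bound W(V) ≤ |V|^(B(V)+1) holds for values. -/

import Mathlib

/-! For a fixed parameter `n ≥ 1`, each constructor contributes at most one symbol's worth of weight,
and only `!` multiplies, by `n`; hence `W_n(P) ≤ |P| * n ^ B(P)` (`wP_le`).
The duplicability factor counts occurrences of a variable, or is `1`, so `1 ≤ D(P) ≤ |P|`
(`one_le_dP`, `dP_le_sizeP`). Taking `n = D(P)` gives `W(P) ≤ |P| * |P| ^ B(P)`. -/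

/-! Syntax of LHOπ / SHOπ processes and values (variables in de Bruijn style,
channels as names). -/

mutual
inductive Val : Type
  | star : Val
  | var : ℕ → Val
  | lam : Proc → Val
  | blam : Proc → Val
  | bang : Val → Val
inductive Proc : Type
  | nil : Proc
  | par : Proc → Proc → Proc
  | inp : ℕ → Proc → Proc
  | binp : ℕ → Proc → Proc
  | out : ℕ → Val → Proc → Proc
  | nu : ℕ → Proc → Proc
  | app : Val → Val → Proc
end

/-! Lifting and capture-avoiding substitution. -/

mutual
def liftV (c : ℕ) : Val → Val
  | .star => .star
  | .var x => if x < c then .var x else .var (x + 1)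
  | .lam P => .lam (liftP (c + 1) P)
  | .blam P => .blam (liftP (c + 1) P)
  | .bang V => .bang (liftV c V)
def liftP (c : ℕ) : Proc → Proc
  | .nil => .nil
  | .par P Q => .par (liftP c P) (liftP c Q)
  | .inp a P => .inp a (liftP (c + 1) P)
  | .binp a P => .binp a (liftP (c + 1) P)
  | .out a V P => .out a (liftV c V) (liftP c P)
  | .nu a P => .nu a (liftP c P)
  | .app V W => .app (liftV c V) (liftV c W)
end

mutual
def substV (U : Val) (k : ℕ) : Val → Val
  | .star => .star
  | .var x => if x = k then U else if x < k then .var x else .var (x - 1)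
  | .lam P => .lam (substP (liftV 0 U) (k + 1) P)
  | .blam P => .blam (substP (liftV 0 U) (k + 1) P)
  | .bang V => .bang (substV U k V)
def substP (U : Val) (k : ℕ) : Proc → Proc
  | .nil => .nil
  | .par P Q => .par (substP U k P) (substP U k Q)
  | .inp a P => .inp a (substP (liftV 0 U) (k + 1) P)
  | .binp a P => .binp a (substP (liftV 0 U) (k + 1) P)
  | .out a V P => .out a (substV U k V) (substP U k P)
  | .nu a P => .nu a (substP U k P)
  | .app V W => .app (substV U k V) (substV U k W)
end

/-! Free channels and channel renaming (for α-conversion of restrictions). -/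

mutual
def fcV : Val → Finset ℕ
  | .star => ∅
  | .var _ => ∅
  | .lam P => fcP P
  | .blam P => fcP P
  | .bang V => fcV V
def fcP : Proc → Finset ℕ
  | .nil => ∅
  | .par P Q => fcP P ∪ fcP Q
  | .inp a P => insert a (fcP P)
  | .binp a P => insert a (fcP P)
  | .out a V P => insert a (fcV V ∪ fcP P)
  | .nu a P => fcP P \ {a}
  | .app V W => fcV V ∪ fcV W
end

mutual
def chV (a b : ℕ) : Val → Val
  | .star => .star
  | .var x => .var x
  | .lam P => .lam (chP a b P)
  | .blam P => .blam (chP a b P)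
  | .bang V => .bang (chV a b V)
def chP (a b : ℕ) : Proc → Proc
  | .nil => .nil
  | .par P Q => .par (chP a b P) (chP a b Q)
  | .inp c P => .inp (if c = a then b else c) (chP a b P)
  | .binp c P => .binp (if c = a then b else c) (chP a b P)
  | .out c V P => .out (if c = a then b else c) (chV a b V) (chP a b P)
  | .nu c P => if c = a then .nu c P else .nu c (chP a b P)
  | .app V W => .app (chV a b V) (chV a b W)
end

/-! Structural congruence: the smallest congruence containing α-equivalence
(for channel restrictions; α-equivalence of variables is syntactic identity in
de Bruijn style), associativity and commutativity of parallel composition,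
exchange of restrictions, and scope extrusion.  No garbage-collection laws. -/

mutual
inductive SCV : Val → Val → Prop
  | refl (V) : SCV V V
  | symm : SCV V W → SCV W V
  | trans : SCV U V → SCV V W → SCV U W
  | lam : SCP P Q → SCV (.lam P) (.lam Q)
  | blam : SCP P Q → SCV (.blam P) (.blam Q)
  | bang : SCV V W → SCV (.bang V) (.bang W)
inductive SCP : Proc → Proc → Prop
  | refl (P) : SCP P P
  | symm : SCP P Q → SCP Q P
  | trans : SCP P Q → SCP Q R → SCP P R
  | par : SCP P P' → SCP Q Q' → SCP (.par P Q) (.par P' Q')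
  | inp : SCP P Q → SCP (.inp a P) (.inp a Q)
  | binp : SCP P Q → SCP (.binp a P) (.binp a Q)
  | out : SCV V W → SCP P Q → SCP (.out a V P) (.out a W Q)
  | nu : SCP P Q → SCP (.nu a P) (.nu a Q)
  | app : SCV V V' → SCV W W' → SCP (.app V W) (.app V' W')
  | assoc : SCP (.par P (.par Q R)) (.par (.par P Q) R)
  | comm : SCP (.par P Q) (.par Q P)
  | nuswap : SCP (.nu a (.nu b P)) (.nu b (.nu a P))
  | extrude : a ∉ fcP Q → SCP (.nu a (.par P Q)) (.par (.nu a P) Q)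
  | alpha : b ∉ fcP P → SCP (.nu a P) (.nu b (chP a b P))
end

/-! Reduction. -/

inductive Red : Proc → Proc → Prop
  | comm : Red (.par (.out a V P) (.inp a Q)) (.par P (substP V 0 Q))
  | bcomm : Red (.par (.out a (.bang V) P) (.binp a Q)) (.par P (substP V 0 Q))
  | beta : Red (.app (.lam P) V) (substP V 0 P)
  | bbeta : Red (.app (.blam P) (.bang V)) (substP V 0 P)
  | parL : Red P Q → Red (.par P R) (.par Q R)
  | res : Red P Q → Red (.nu a P) (.nu a Q)
  | struct : SCP P P' → Red P' Q' → SCP Q' Q → Red P Q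

/-- `m`-step reduction. -/
inductive RedN : ℕ → Proc → Proc → Prop
  | zero : RedN 0 P P
  | succ : Red P Q → RedN n Q R → RedN (n + 1) P R

/-! SHOπ well-formation.  A context entry is `none` (absent) or a marker:
linear `x`, nonlinear `!x`, or nonlinear `§x`. -/

inductive SMark : Type
  | lin : SMark
  | bang : SMark
  | para : SMark
deriving DecidableEq

abbrev Ctx := List (Option SMark)

/-- Contexts made only of §-marked (or absent) variables: these admit
weakening. -/
def ParaOnly (Γ : Ctx) : Prop := ∀ e ∈ Γ, e = none ∨ e = some .para

/-- Splitting one context entry between the two premises of a binary rule: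
linear and !-variables go to exactly one premise, §-variables may be shared
(implicit contraction). -/
inductive SplitE : Option SMark → Option SMark → Option SMark → Prop
  | none : SplitE none none none
  | linL : SplitE (some .lin) (some .lin) none
  | linR : SplitE (some .lin) none (some .lin)
  | bangL : SplitE (some .bang) (some .bang) none
  | bangR : SplitE (some .bang) none (some .bang)
  | paraL : SplitE (some .para) (some .para) none
  | paraR : SplitE (some .para) none (some .para)
  | paraB : SplitE (some .para) (some .para) (some .para)

inductive Split : Ctx → Ctx → Ctx → Prop
  | nil : Split [] [] []
  | cons : SplitE e e₁ e₂ → Split Γ Γ₁ Γ₂ → Split (e :: Γ) (e₁ :: Γ₁) (e₂ :: Γ₂)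

/-- Entry-wise relation between the context of `V` and the context of `!V`:
linear variables become !-marked ones, and weakening by §-variables is
allowed.  §- and !-variables may not appear inside a !-box. -/
inductive BangE : Option SMark → Option SMark → Prop
  | lin : BangE (some .lin) (some .bang)
  | none : BangE none none
  | para : BangE none (some .para)

inductive BangCtx : Ctx → Ctx → Prop
  | nil : BangCtx [] []
  | cons : BangE e e' → BangCtx Γ Γ' → BangCtx (e :: Γ) (e' :: Γ')

mutual
inductive WfV : Ctx → Val → Prop
  | star : ParaOnly Γ → WfV Γ .star
  | varLin : ParaOnly Γ → WfV (some .lin :: Γ) (.var 0)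
  | varPara : ParaOnly Γ → WfV (some .para :: Γ) (.var 0)
  | varThere : (e = none ∨ e = some SMark.para) → WfV Γ (.var x) →
      WfV (e :: Γ) (.var (x + 1))
  | lam : WfP (some .lin :: Γ) P → WfV Γ (.lam P)
  | blamBang : WfP (some .bang :: Γ) P → WfV Γ (.blam P)
  | blamPara : WfP (some .para :: Γ) P → WfV Γ (.blam P)
  | bang : BangCtx Γ Δ → WfV Γ V → WfV Δ (.bang V)
inductive WfP : Ctx → Proc → Prop
  | nil : ParaOnly Γ → WfP Γ .nil
  | par : Split Γ Γ₁ Γ₂ → WfP Γ₁ P → WfP Γ₂ Q → WfP Γ (.par P Q)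
  | inp : WfP (some .lin :: Γ) P → WfP Γ (.inp a P)
  | binpBang : WfP (some .bang :: Γ) P → WfP Γ (.binp a P)
  | binpPara : WfP (some .para :: Γ) P → WfP Γ (.binp a P)
  | out : Split Γ Γ₁ Γ₂ → WfV Γ₁ V → WfP Γ₂ P → WfP Γ (.out a V P)
  | nu : WfP Γ P → WfP Γ (.nu a P)
  | app : Split Γ Γ₁ Γ₂ → WfV Γ₁ V → WfV Γ₂ W → WfP Γ (.app V W)
end

/-! Measures: size, box depth, free occurrences, duplicability factor,
parametrized weight, weight. -/

mutual
def sizeV : Val → ℕ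
  | .star => 1
  | .var _ => 1
  | .lam P => sizeP P + 1
  | .blam P => sizeP P + 1
  | .bang V => sizeV V + 1
def sizeP : Proc → ℕ
  | .nil => 1
  | .par P Q => sizeP P + sizeP Q + 1
  | .inp _ P => sizeP P + 1
  | .binp _ P => sizeP P + 1
  | .out _ V P => sizeV V + sizeP P + 1
  | .nu _ P => sizeP P + 1
  | .app V W => sizeV V + sizeV W + 1
end

mutual
def bdV : Val → ℕ
  | .star => 0
  | .var _ => 0
  | .lam P => bdP P
  | .blam P => bdP P
  | .bang V => bdV V + 1
def bdP : Proc → ℕ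
  | .nil => 0
  | .par P Q => max (bdP P) (bdP Q)
  | .inp _ P => bdP P
  | .binp _ P => bdP P
  | .out _ V P => max (bdV V) (bdP P)
  | .nu _ P => bdP P
  | .app V W => max (bdV V) (bdV W)
end

-- Number of free occurrences of the variable (de Bruijn index) `k`.
mutual
def foV (k : ℕ) : Val → ℕ
  | .star => 0
  | .var x => if x = k then 1 else 0
  | .lam P => foP (k + 1) P
  | .blam P => foP (k + 1) P
  | .bang V => foV k V
def foP (k : ℕ) : Proc → ℕ
  | .nil => 0
  | .par P Q => foP k P + foP k Q
  | .inp _ P => foP (k + 1) P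
  | .binp _ P => foP (k + 1) P
  | .out _ V P => foV k V + foP k P
  | .nu _ P => foP k P
  | .app V W => foV k V + foV k W
end

-- Duplicability factor.
mutual
def dV : Val → ℕ
  | .star => 1
  | .var _ => 1
  | .lam P => max (dP P) (foP 0 P)
  | .blam P => max (dP P) (foP 0 P)
  | .bang V => dV V
def dP : Proc → ℕ
  | .nil => 1
  | .par P Q => max (dP P) (dP Q)
  | .inp _ P => max (dP P) (foP 0 P)
  | .binp _ P => max (dP P) (foP 0 P)
  | .out _ V P => max (dV V) (dP P)
  | .nu _ P => dP P
  | .app V W => max (dV V) (dV W)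
end

-- `n`-parametrized weight.
mutual
def wV (n : ℕ) : Val → ℕ
  | .star => 1
  | .var _ => 1
  | .lam P => wP n P
  | .blam P => wP n P
  | .bang V => n * wV n V + 1
def wP (n : ℕ) : Proc → ℕ
  | .nil => 1
  | .par P Q => wP n P + wP n Q + 1
  | .inp _ P => wP n P + 1
  | .binp _ P => wP n P + 1
  | .out _ V P => wV n V + wP n P
  | .nu _ P => wP n P
  | .app V W => wV n V + wV n W + 1
end

/-- The weight of a process. -/
def weightP (P : Proc) : ℕ := wP (dP P) P
/-- The weight of a value. -/
def weightV (V : Val) : ℕ := wV (dV V) V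

/-! ### The duplicability factor lies between one and the size -/

mutual
theorem foV_le_sizeV (k : ℕ) : ∀ V : Val, foV k V ≤ sizeV V
  | .star => by simp [foV]
  | .var x => by simp only [foV, sizeV]; split <;> omega
  | .lam P => by have := foP_le_sizeP (k + 1) P; simp only [foV, sizeV]; omega
  | .blam P => by have := foP_le_sizeP (k + 1) P; simp only [foV, sizeV]; omega
  | .bang V => by have := foV_le_sizeV k V; simp only [foV, sizeV]; omega
theorem foP_le_sizeP (k : ℕ) : ∀ P : Proc, foP k P ≤ sizeP P
  | .nil => by simp [foP]
  | .par P Q => by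
    have := foP_le_sizeP k P; have := foP_le_sizeP k Q; simp only [foP, sizeP]; omega
  | .inp _ P => by have := foP_le_sizeP (k + 1) P; simp only [foP, sizeP]; omega
  | .binp _ P => by have := foP_le_sizeP (k + 1) P; simp only [foP, sizeP]; omega
  | .out _ V P => by
    have := foV_le_sizeV k V; have := foP_le_sizeP k P; simp only [foP, sizeP]; omega
  | .nu _ P => by have := foP_le_sizeP k P; simp only [foP, sizeP]; omega
  | .app V W => by
    have := foV_le_sizeV k V; have := foV_le_sizeV k W; simp only [foP, sizeP]; omega
end

mutual
theorem dV_le_sizeV : ∀ V : Val, dV V ≤ sizeV V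
  | .star => by simp [dV, sizeV]
  | .var x => by simp [dV, sizeV]
  | .lam P => by
    have := dP_le_sizeP P; have := foP_le_sizeP 0 P; simp only [dV, sizeV]; omega
  | .blam P => by
    have := dP_le_sizeP P; have := foP_le_sizeP 0 P; simp only [dV, sizeV]; omega
  | .bang V => by have := dV_le_sizeV V; simp only [dV, sizeV]; omega
theorem dP_le_sizeP : ∀ P : Proc, dP P ≤ sizeP P
  | .nil => by simp [dP, sizeP]
  | .par P Q => by
    have := dP_le_sizeP P; have := dP_le_sizeP Q; simp only [dP, sizeP]; omega
  | .inp _ P => by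
    have := dP_le_sizeP P; have := foP_le_sizeP 0 P; simp only [dP, sizeP]; omega
  | .binp _ P => by
    have := dP_le_sizeP P; have := foP_le_sizeP 0 P; simp only [dP, sizeP]; omega
  | .out _ V P => by
    have := dV_le_sizeV V; have := dP_le_sizeP P; simp only [dP, sizeP]; omega
  | .nu _ P => by have := dP_le_sizeP P; simp only [dP, sizeP]; omega
  | .app V W => by
    have := dV_le_sizeV V; have := dV_le_sizeV W; simp only [dP, sizeP]; omega
end

mutual
theorem one_le_dV : ∀ V : Val, 1 ≤ dV V
  | .star => le_rfl
  | .var _ => le_rfl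
  | .lam P => (one_le_dP P).trans (le_max_left _ _)
  | .blam P => (one_le_dP P).trans (le_max_left _ _)
  | .bang V => one_le_dV V
theorem one_le_dP : ∀ P : Proc, 1 ≤ dP P
  | .nil => le_rfl
  | .par P _ => (one_le_dP P).trans (le_max_left _ _)
  | .inp _ P => (one_le_dP P).trans (le_max_left _ _)
  | .binp _ P => (one_le_dP P).trans (le_max_left _ _)
  | .out _ V _ => (one_le_dV V).trans (le_max_left _ _)
  | .nu _ P => one_le_dP P
  | .app V _ => (one_le_dV V).trans (le_max_left _ _)
end

/-! ### The parametrized weight -/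

/-- Bound for the constructors with one subterm. For `!`, `w` is `n` times the weight of the body
and `b` already counts the box. -/
theorem weight_unary_aux {n w s b : ℕ} (hn : 1 ≤ n) (h : w ≤ s * n ^ b) :
    w + 1 ≤ (s + 1) * n ^ b := by
  have := Nat.one_le_pow b n hn
  rw [add_mul]; omega

/-- Bound for the constructors with two subterms: both powers of `n` are raised to the larger box
depth. -/
theorem weight_binary_aux {n w₁ w₂ s₁ s₂ b₁ b₂ : ℕ} (hn : 1 ≤ n)
    (h₁ : w₁ ≤ s₁ * n ^ b₁) (h₂ : w₂ ≤ s₂ * n ^ b₂) :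
    w₁ + w₂ + 1 ≤ (s₁ + s₂ + 1) * n ^ max b₁ b₂ := by
  apply weight_unary_aux hn
  rw [add_mul]
  exact add_le_add
    (h₁.trans (Nat.mul_le_mul_left _ (Nat.pow_le_pow_right hn (le_max_left _ _))))
    (h₂.trans (Nat.mul_le_mul_left _ (Nat.pow_le_pow_right hn (le_max_right _ _))))

mutual
theorem wV_le {n : ℕ} (hn : 1 ≤ n) : ∀ V : Val, wV n V ≤ sizeV V * n ^ bdV V
  | .star => by simp [wV, sizeV, bdV]
  | .var _ => by simp [wV, sizeV, bdV]
  | .lam P => (Nat.le_succ _).trans (weight_unary_aux hn (wP_le hn P))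
  | .blam P => (Nat.le_succ _).trans (weight_unary_aux hn (wP_le hn P))
  | .bang V => by
    simp only [wV, sizeV, bdV]
    apply weight_unary_aux hn
    calc n * wV n V ≤ n * (sizeV V * n ^ bdV V) := Nat.mul_le_mul_left _ (wV_le hn V)
      _ = sizeV V * n ^ (bdV V + 1) := by ring
theorem wP_le {n : ℕ} (hn : 1 ≤ n) : ∀ P : Proc, wP n P ≤ sizeP P * n ^ bdP P
  | .nil => by simp [wP, sizeP, bdP]
  | .par P Q => weight_binary_aux hn (wP_le hn P) (wP_le hn Q)
  | .inp _ P => weight_unary_aux hn (wP_le hn P)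
  | .binp _ P => weight_unary_aux hn (wP_le hn P)
  | .out _ V P => (Nat.le_succ _).trans (weight_binary_aux hn (wV_le hn V) (wP_le hn P))
  | .nu _ P => (Nat.le_succ _).trans (weight_unary_aux hn (wP_le hn P))
  | .app V W => weight_binary_aux hn (wV_le hn V) (wV_le hn W)
end

/-- Polynomial bound on the weight: `W(P) ≤ |P| ^ (B(P) + 1)`, and similarly
for values. -/
theorem weight_poly_bound :
    (∀ P : Proc, weightP P ≤ sizeP P ^ (bdP P + 1)) ∧
    (∀ V : Val, weightV V ≤ sizeV V ^ (bdV V + 1)) := by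
  refine ⟨fun P => ?_, fun V => ?_⟩
  · rw [pow_succ']
    exact (wP_le (one_le_dP P) P).trans
      (Nat.mul_le_mul_left _ (Nat.pow_le_pow_left (dP_le_sizeP P) _))
  · rw [pow_succ']
    exact (wV_le (one_le_dV V) V).trans
      (Nat.mul_le_mul_left _ (Nat.pow_le_pow_left (dV_le_sizeV V) _))
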